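/- arXiv:1704.03778 — 4 statements merged into one kernel-verified Lean document; each statement's English description precedes it below -/
import Mathlib

section
/- Let ℓ ≥ 1 be an integer, and let s and p be column vectors in ℤ^{ℓ+1} with last entry s_{ℓ+1} = 1. Set d := sᵀp and assume d ≠ 0. Let γ be the greatest common divisor of the entries of p. Then the matrix L := d·I_{ℓ+1} − p·sᵀ ∈ ℤ^{(ℓ+1)×(ℓ+1)} has cokernel ℤ^{ℓ+1} / (L·ℤ^{ℓ+1}) isomorphic as an abelian group to ℤ ⊕ (ℤ/γℤ) ⊕ (ℤ/dℤ)^{ℓ−1}. -/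
/-!
View `s` as a surjective linear form on the free module `M = R ^ (n + 2)`, and `d • 1 - p sᵀ` as the
map `z ↦ d • z - s z • p` with `d = s p`. Choose `u` with `s u = 1`. Then `M = ker s ⊕ R u`, and the
range of this map lies in `ker s`: it is generated by `d • ker s` and the component `q = p - d • u`
of `p` in `ker s`. So the cokernel is `R × (ker s ⧸ (d • ker s + R q))`. Over a principal ideal
domain `q` is a multiple `c • b₀` of a basis vector of `ker s`, which diagonalises the second factor
as `R ⧸ (d, c) × (R ⧸ (d)) ^ n`. Finally `(d, c)` is the ideal of all values of linear forms at `p`,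
because that ideal contains `d`, and `p` and `q` agree modulo `d`.
-/

open Module
open scoped Pointwise Matrix

section OrderIdeal

variable {R M : Type*} [CommRing R] [AddCommGroup M] [Module R M]

/-- The order ideal of `x`: the set of values at `x` of all linear forms on the module. For a vector
in a free module it is generated by the coordinates, so it is a coordinate-free greatest common
divisor. -/
def orderIdeal (x : M) : Ideal R :=
  LinearMap.range (Dual.eval R M x)

theorem apply_mem_orderIdeal (f : Dual R M) (x : M) : f x ∈ orderIdeal (R := R) x :=
  ⟨f, rfl⟩

theorem orderIdeal_le_iff {x : M} {I : Ideal R} : orderIdeal x ≤ I ↔ ∀ f : Dual R M, f x ∈ I :=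
  LinearMap.range_le_iff_comap.trans Submodule.eq_top_iff'

theorem orderIdeal_eq_span_range_equivFun {ι : Type*} [Finite ι] (b : Basis ι R M) (x : M) :
    orderIdeal x = Ideal.span (Set.range (b.equivFun x)) := by
  have := Fintype.ofFinite ι
  refine le_antisymm (orderIdeal_le_iff.2 fun f => ?_) (Ideal.span_le.2 ?_)
  · have hf : f x = ∑ i, b.equivFun x i * f (b i) := by
      simp_rw [← smul_eq_mul, ← map_smul, ← map_sum, b.sum_equivFun]
    rw [hf]
    exact Ideal.sum_mem _ fun i _ => Ideal.mul_mem_right _ _ (Ideal.subset_span ⟨i, rfl⟩)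
  · rintro _ ⟨i, rfl⟩
    exact apply_mem_orderIdeal (b.coord i) x

theorem orderIdeal_smul_basis {ι : Type*} (b : Basis ι R M) (c : R) (i : ι) :
    orderIdeal (c • b i) = Ideal.span {c} := by
  refine le_antisymm (orderIdeal_le_iff.2 fun f => ?_) ((Ideal.span_singleton_le_iff_mem _).2 ?_)
  · rw [map_smul]
    exact Ideal.mul_mem_right _ _ (Ideal.mem_span_singleton_self c)
  · simpa using apply_mem_orderIdeal (b.coord i) (c • b i)

end OrderIdeal

section SplitKernel

variable {R M : Type*} [CommRing R] [AddCommGroup M] [Module R M] {s : Dual R M} {u : M}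

/-- The projection `x ↦ x - s x • u` onto the kernel of a linear form `s`, along a vector `u` with
`s u = 1`. -/
def kerProj (hu : s u = 1) : M →ₗ[R] LinearMap.ker s :=
  (LinearMap.id - s.smulRight u).codRestrict _ fun x => by simp [hu]

@[simp]
theorem coe_kerProj (hu : s u = 1) (x : M) : (kerProj hu x : M) = x - s x • u :=
  rfl

theorem kerProj_coe (hu : s u = 1) (x : LinearMap.ker s) : kerProj hu x = x := by
  ext; simp

theorem span_sup_orderIdeal_kerProj (hu : s u = 1) (p : M) :
    Ideal.span {s p} ⊔ orderIdeal (kerProj hu p) = orderIdeal p := by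
  refine le_antisymm (sup_le ?_ (orderIdeal_le_iff.2 fun f => ?_)) (orderIdeal_le_iff.2 fun f => ?_)
  · exact (Ideal.span_singleton_le_iff_mem _).2 (apply_mem_orderIdeal s p)
  · exact apply_mem_orderIdeal (f ∘ₗ kerProj hu) p
  · have hf : f p = s p * f u + f (kerProj hu p) := by simp
    rw [hf]
    exact Submodule.add_mem_sup (Ideal.mul_mem_right _ _ (Ideal.mem_span_singleton_self _))
      (apply_mem_orderIdeal (f ∘ₗ (LinearMap.ker s).subtype) _)

theorem mem_range_smul_id_sub_smulRight_iff (hu : s u = 1) (p x : M) :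
    x ∈ LinearMap.range (s p • LinearMap.id - s.smulRight p) ↔
      s x = 0 ∧ kerProj hu x ∈ s p • (⊤ : Submodule R (LinearMap.ker s)) ⊔ R ∙ kerProj hu p := by
  simp only [LinearMap.mem_range, Submodule.mem_sup, Submodule.mem_smul_pointwise_iff_exists,
    Submodule.mem_top, true_and, Submodule.mem_span_singleton, exists_exists_eq_and]
  constructor
  · rintro ⟨z, rfl⟩
    refine ⟨by simp [mul_comm], kerProj hu z, -s z, ?_⟩
    ext
    simp only [Submodule.coe_add, SetLike.val_smul, coe_kerProj, LinearMap.sub_apply,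
      LinearMap.smul_apply, LinearMap.id_apply, LinearMap.smulRight_apply, map_sub, map_smul,
      AddSubgroupClass.coe_sub]
    module
  · rintro ⟨hx, y, a, h⟩
    have h' : s p • (y : M) + a • (p - s p • u) = x := by
      simpa [hx] using congrArg Subtype.val h
    refine ⟨y - a • u, ?_⟩
    simp only [LinearMap.sub_apply, LinearMap.smul_apply, LinearMap.id_apply,
      LinearMap.smulRight_apply, map_sub, map_smul, LinearMap.map_coe_ker, hu, ← h']
    module

theorem nonempty_quotient_range_equiv_prod_ker (hu : s u = 1) (p : M) :
    Nonempty ((M ⧸ LinearMap.range (s p • LinearMap.id - s.smulRight p)) ≃ₗ[R]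
      R × (LinearMap.ker s ⧸ s p • (⊤ : Submodule R (LinearMap.ker s)) ⊔ R ∙ kerProj hu p)) := by
  set N := s p • (⊤ : Submodule R (LinearMap.ker s)) ⊔ R ∙ kerProj hu p
  let φ : M →ₗ[R] R × (LinearMap.ker s ⧸ N) := s.prod (N.mkQ ∘ₗ kerProj hu)
  have hker : LinearMap.range (s p • LinearMap.id - s.smulRight p) = LinearMap.ker φ := by
    ext x
    simp [mem_range_smul_id_sub_smulRight_iff hu, φ, N]
  have hsurj : Function.Surjective φ := by
    rintro ⟨a, y⟩
    obtain ⟨y, rfl⟩ := N.mkQ_surjective y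
    have hu0 : kerProj hu u = 0 := by ext; simp [hu]
    exact ⟨y + a • u, by simp [φ, hu, hu0, kerProj_coe]⟩
  exact ⟨(Submodule.quotEquivOfEq _ _ hker).trans (φ.quotKerEquivOfSurjective hsurj)⟩

end SplitKernel

section Diagonal

variable {R M : Type*} [CommRing R] [AddCommGroup M] [Module R M]

theorem smul_top_sup_span_smul_basis {n : ℕ} (b : Basis (Fin (n + 1)) R M) (c d : R) :
    d • (⊤ : Submodule R M) ⊔ R ∙ (c • b 0) =
      (Submodule.pi Set.univ (Fin.cons (Ideal.span {d} ⊔ Ideal.span {c})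
        fun _ => Ideal.span {d} : Fin (n + 1) → Ideal R)).comap b.equivFun.toLinearMap := by
  ext x
  simp only [Submodule.mem_sup, Submodule.mem_smul_pointwise_iff_exists, Submodule.mem_top,
    true_and, exists_exists_eq_and, Submodule.mem_span_singleton, Submodule.mem_comap,
    Submodule.mem_pi, Set.mem_univ, forall_const, Fin.forall_fin_succ, Fin.cons_zero, Fin.cons_succ,
    LinearEquiv.coe_coe, Basis.equivFun_apply]
  constructor
  · rintro ⟨y, a, rfl⟩
    exact ⟨⟨b.repr y 0, a, by simp [mul_comm]⟩, fun i => ⟨b.repr y i.succ, by simp [mul_comm]⟩⟩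
  · rintro ⟨⟨r, a, h0⟩, h⟩
    choose v hv using h
    refine ⟨b.equivFun.symm (Fin.cons r v), a, b.equivFun.injective (funext fun i => ?_)⟩
    rw [map_add, map_smul, LinearEquiv.apply_symm_apply]
    cases i using Fin.cases with
    | zero => simp [← h0, mul_comm]
    | succ i => simp [← hv, mul_comm]

theorem nonempty_quotient_smul_top_sup_span_smul_basis_equiv {n : ℕ}
    (b : Basis (Fin (n + 1)) R M) (c d : R) :
    Nonempty ((M ⧸ d • (⊤ : Submodule R M) ⊔ R ∙ (c • b 0)) ≃ₗ[R]
      (R ⧸ Ideal.span {d} ⊔ Ideal.span {c}) × (Fin n → R ⧸ Ideal.span {d})) := by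
  let I : Fin (n + 1) → Ideal R :=
    Fin.cons (Ideal.span {d} ⊔ Ideal.span {c}) fun _ => Ideal.span {d}
  have e := Submodule.Quotient.equiv (d • (⊤ : Submodule R M) ⊔ R ∙ (c • b 0))
    (Submodule.pi Set.univ I) b.equivFun <| by
      rw [smul_top_sup_span_smul_basis]
      exact Submodule.map_comap_eq_of_surjective b.equivFun.surjective _
  exact ⟨e.trans ((Submodule.quotientPi I).trans (Fin.consLinearEquiv R fun i => R ⧸ I i).symm)⟩

end Diagonal

section PrincipalIdealDomain

variable {R M : Type*} [CommRing R] [IsDomain R] [IsPrincipalIdealRing R]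
  [AddCommGroup M] [Module R M]

theorem exists_basis_eq_smul {ι : Type*} [Finite ι] (b : Basis ι R M) (i : ι) (x : M) :
    ∃ (b' : Basis ι R M) (c : R), x = c • b' i := by
  classical
  obtain rfl | hx := eq_or_ne x 0
  · exact ⟨b, 0, (zero_smul R _).symm⟩
  obtain ⟨k, bM, bN, f, a, h⟩ := Submodule.smithNormalForm b (R ∙ x)
  have := Module.Free.of_basis b
  obtain rfl : k = 1 := by
    simpa [← (LinearEquiv.toSpanNonzeroSingleton R M x hx).finrank_eq] using
      (finrank_eq_card_basis bN).symm
  have hsum := congrArg Subtype.val (bN.sum_repr ⟨x, Submodule.mem_span_singleton_self x⟩)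
  simp only [Fin.sum_univ_one, Submodule.coe_smul, h, smul_smul] at hsum
  exact ⟨bM.reindex (Equiv.swap (f 0) i), _, by simpa using hsum.symm⟩

variable [Module.Free R M] [Module.Finite R M]

theorem nonempty_quotient_smul_top_sup_span_singleton_equiv {n : ℕ} (hn : finrank R M = n + 1)
    (d : R) (x : M) :
    Nonempty ((M ⧸ d • (⊤ : Submodule R M) ⊔ R ∙ x) ≃ₗ[R]
      (R ⧸ Ideal.span {d} ⊔ orderIdeal x) × (Fin n → R ⧸ Ideal.span {d})) := by
  obtain ⟨b, c, rfl⟩ := exists_basis_eq_smul (finBasisOfFinrankEq R M hn) 0 x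
  rw [orderIdeal_smul_basis]
  exact nonempty_quotient_smul_top_sup_span_smul_basis_equiv b c d

theorem nonempty_quotient_range_smul_id_sub_smulRight_equiv {n : ℕ} (hn : finrank R M = n + 2)
    {s : Dual R M} (hs : Function.Surjective s) (p : M) :
    Nonempty ((M ⧸ LinearMap.range (s p • LinearMap.id - s.smulRight p)) ≃ₗ[R]
      R × (R ⧸ orderIdeal p) × (Fin n → R ⧸ Ideal.span {s p})) := by
  obtain ⟨u, hu⟩ := hs 1
  have hker : finrank R (LinearMap.ker s) = n + 1 := by
    have h := (LinearMap.ker s).finrank_quotient_add_finrank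
    rw [(s.quotKerEquivOfSurjective hs).finrank_eq, finrank_self] at h
    omega
  obtain ⟨e⟩ := nonempty_quotient_range_equiv_prod_ker hu p
  obtain ⟨e'⟩ := nonempty_quotient_smul_top_sup_span_singleton_equiv hker (s p) (kerProj hu p)
  rw [span_sup_orderIdeal_kerProj hu p] at e'
  exact ⟨e.trans ((LinearEquiv.refl R R).prodCongr e')⟩

end PrincipalIdealDomain

section Matrix

theorem mulVecLin_smul_one_sub_vecMulVec {R ι : Type*} [CommRing R] [Fintype ι] [DecidableEq ι]
    (d : R) (p s : ι → R) :
    (d • (1 : Matrix ι ι R) - Matrix.vecMulVec p s).mulVecLin =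
      d • LinearMap.id - (dotProductBilin R R s).smulRight p := by
  ext; simp [Matrix.vecMulVec_apply, mul_comm]

theorem surjective_dotProductBilin {R ι : Type*} [CommRing R] [Fintype ι] {s : ι → R}
    (hs : Ideal.span (Set.range s) = ⊤) : Function.Surjective (dotProductBilin R R s) := by
  intro r
  obtain ⟨u, hu⟩ := Ideal.mem_span_range_iff_exists_fun.1 (hs ▸ Submodule.mem_top (x := r))
  exact ⟨u, (dotProduct_comm s u).trans hu⟩

theorem span_range_eq_span_gcd {R ι : Type*} [CommRing R] [IsBezout R] [NormalizedGCDMonoid R]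
    [Fintype ι] (p : ι → R) :
    Ideal.span (Set.range p) = Ideal.span {Finset.univ.gcd p} := by
  refine le_antisymm (Ideal.span_le.2 ?_) ((Ideal.span_singleton_le_iff_mem _).2 ?_)
  · rintro _ ⟨i, rfl⟩
    exact Ideal.mem_span_singleton.2 (Finset.gcd_dvd (Finset.mem_univ i))
  · obtain ⟨g, hg⟩ := Finset.univ.gcd_eq_sum_mul p
    exact Ideal.mem_span_range_iff_exists_fun.2 ⟨g, by simp only [hg, mul_comm]⟩

theorem stmt2_general {R ι : Type*} [CommRing R] [IsDomain R] [IsPrincipalIdealRing R] [Fintype ι]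
    [DecidableEq ι] {n : ℕ} (hn : Fintype.card ι = n + 2) {s : ι → R}
    (hs : Ideal.span (Set.range s) = ⊤) (p : ι → R) :
    Nonempty (((ι → R) ⧸
        LinearMap.range ((s ⬝ᵥ p) • (1 : Matrix ι ι R) - Matrix.vecMulVec p s).mulVecLin) ≃ₗ[R]
      R × (R ⧸ Ideal.span (Set.range p)) × (Fin n → R ⧸ Ideal.span {s ⬝ᵥ p})) := by
  rw [mulVecLin_smul_one_sub_vecMulVec]
  have hp : Ideal.span (Set.range p) = orderIdeal p := by
    rw [orderIdeal_eq_span_range_equivFun (Pi.basisFun R ι), Pi.basisFun_equivFun,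
      LinearEquiv.refl_apply]
  rw [hp]
  exact nonempty_quotient_range_smul_id_sub_smulRight_equiv ((finrank_pi R).trans hn)
    (surjective_dotProductBilin hs) p

end Matrix

/-- Let `ℓ ≥ 1` and `s, p ∈ ℤ^{ℓ+1}` with `s_{ℓ+1} = 1`.
Set `d := sᵀp ≠ 0` and let `γ = gcd(p)`. Then `L := d·I − p·sᵀ` has cokernel
`ℤ^{ℓ+1} / (L·ℤ^{ℓ+1}) ≅ ℤ ⊕ (ℤ/γℤ) ⊕ (ℤ/dℤ)^{ℓ−1}`. -/
theorem stmt2 (ℓ : ℕ) (hℓ : 1 ≤ ℓ) (s p : Fin (ℓ + 1) → ℤ)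
    (hs1 : s (Fin.last ℓ) = 1)
    (d : ℤ) (hd : d = ∑ i, s i * p i) (hd0 : d ≠ 0)
    (γ : ℕ) (hγ : (γ : ℤ) = Finset.univ.gcd p)
    (L : Matrix (Fin (ℓ + 1)) (Fin (ℓ + 1)) ℤ)
    (hL : L = d • (1 : Matrix (Fin (ℓ + 1)) (Fin (ℓ + 1)) ℤ) - Matrix.vecMulVec p s) :
    Nonempty
      (((Fin (ℓ + 1) → ℤ) ⧸ LinearMap.range (Matrix.mulVecLin L)) ≃+
        (ℤ × ZMod γ × (Fin (ℓ - 1) → ZMod d.natAbs))) := by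
  subst hd hL
  obtain ⟨e⟩ := stmt2_general (n := ℓ - 1) (by rw [Fintype.card_fin]; omega)
    ((Ideal.eq_top_iff_one _).2 (Ideal.subset_span ⟨_, hs1⟩)) p
  rw [span_range_eq_span_gcd, ← hγ] at e
  exact ⟨e.toAddEquiv.trans ((AddEquiv.refl ℤ).prodCongr
    ((Int.quotientSpanNatEquivZMod γ).toAddEquiv.prodCongr
      (AddEquiv.piCongrRight fun _ => (Int.quotientSpanEquivZMod _).toAddEquiv)))⟩
end

section
/- Let F be a field and let A be a finite-dimensional Hopf algebra over F with counit ε : A → F. Then the F-subspace A^A := {a ∈ A : b·a = ε(b)·a for all b ∈ A} (the space of left integrals of A) has dimension dim_F A^A = 1. -/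
/-- The `F`-subspace of left integrals
`A^A = {a ∈ A : b·a = ε(b)·a for all b ∈ A}` of a bialgebra `A` over `F`. -/
def leftIntegrals (F : Type*) (A : Type*) [CommSemiring F] [Semiring A]
    [Bialgebra F A] : Submodule F A where
  carrier := {a : A | ∀ b : A, b * a = CoalgebraStruct.counit (R := F) b • a}
  add_mem' := by
    intro x y hx hy b
    rw [mul_add, hx b, hy b, smul_add]
  zero_mem' := by
    intro b
    rw [mul_zero, smul_zero]
  smul_mem' := by
    intro c x hx b
    rw [mul_smul_comm, hx b, smul_comm]

/-!
The dual `A*` acts on `A` from the right by `a ◁ f = ∑ f (S a₂) • a₁`. Together with the coaction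
dual to left multiplication this makes `A` a Hopf module over `A*` whose coinvariants are the left
integrals `I`, so by the fundamental theorem of Hopf modules `f ⊗ t ↦ t ◁ f` is an isomorphism
`A* ⊗ I ≃ A`. Over a field, comparing dimensions already yields `dim I = 1`.

Over a general base ring, restricting `f ↦ f ∘ S` to `I` maps `A*` onto a submodule `N` of `I*`.
Under the isomorphism, left multiplication by `b` on `A` becomes `f ↦ f (· * b)` on `A*`, which is
multiplication by `ε b` on `N` because `S t * b = ε b • S t` for integrals `t`. Hence `N ⊗ I` is
spanned by the image of `1 : A`, and as `ε (t ◁ f) = f (S t)`, evaluation identifies `N ⊗ I`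
with the base ring.
-/

open Coalgebra HopfAlgebra TensorProduct WithConv
open Algebra.TensorProduct (includeLeft includeRight)

section Convolution

variable {R A B C : Type*} [CommSemiring R] [Semiring A] [Algebra R A] [Semiring B] [Algebra R B]

lemma includeLeft_convMul_includeRight [AddCommMonoid C] [Module R C] [Coalgebra R C]
    (f : C →ₗ[R] A) (g : C →ₗ[R] B) :
    toConv ((includeLeft : A →ₐ[R] A ⊗[R] B).toLinearMap ∘ₗ f) *
        toConv ((includeRight : B →ₐ[R] A ⊗[R] B).toLinearMap ∘ₗ g) =
      toConv (TensorProduct.map f g ∘ₗ comul) := by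
  ext c
  simp [(ℛ R c).convMul_apply, ← (ℛ R c).eq]

lemma includeRight_convMul_includeLeft [AddCommMonoid C] [Module R C] [Coalgebra R C]
    (f : C →ₗ[R] B) (g : C →ₗ[R] A) :
    toConv ((includeRight : B →ₐ[R] A ⊗[R] B).toLinearMap ∘ₗ f) *
        toConv ((includeLeft : A →ₐ[R] A ⊗[R] B).toLinearMap ∘ₗ g) =
      toConv (TensorProduct.map g f ∘ₗ (TensorProduct.comm R C C).toLinearMap ∘ₗ comul) := by
  ext c
  simp [(ℛ R c).convMul_apply, ← (ℛ R c).eq]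

lemma algHom_comp_antipode_convMul [Semiring C] [HopfAlgebra R C] (h : C →ₐ[R] A) :
    toConv (h.toLinearMap ∘ₗ antipode R) * toConv h.toLinearMap = 1 := by
  have := LinearMap.algHom_comp_convMul_distrib h (toConv (antipode R)) (toConv LinearMap.id)
  rw [LinearMap.antipode_mul_id] at this
  ext c
  simpa using congr($this c).symm

end Convolution

section HopfAlgebra

variable {R A : Type*} [CommSemiring R] [Semiring A] [HopfAlgebra R A]

theorem comul_comp_antipode :
    comul ∘ₗ antipode R =
      TensorProduct.map (antipode R) (antipode R) ∘ₗ
        (TensorProduct.comm R A A).toLinearMap ∘ₗ comul := by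
  let ι₁ : A →ₐ[R] A ⊗[R] A := includeLeft
  let ι₂ : A →ₐ[R] A ⊗[R] A := includeRight
  have comul_eq : toConv ι₁.toLinearMap * toConv ι₂.toLinearMap = toConv comul :=
    (includeLeft_convMul_includeRight .id .id).trans
      (by rw [TensorProduct.map_id, LinearMap.id_comp])
  have left_inv : toConv (ι₂.toLinearMap ∘ₗ antipode R) * toConv (ι₁.toLinearMap ∘ₗ antipode R) *
      toConv comul = 1 := by
    rw [← comul_eq, mul_assoc, ← mul_assoc _ (toConv ι₁.toLinearMap),
      algHom_comp_antipode_convMul, one_mul, algHom_comp_antipode_convMul]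
  rw [includeRight_convMul_includeLeft] at left_inv
  exact toConv_injective (left_inv_eq_right_inv left_inv LinearMap.comul_right_inv).symm

lemma mem_leftIntegrals {t : A} :
    t ∈ leftIntegrals R A ↔ ∀ a : A, a * t = counit (R := R) a • t :=
  .rfl

variable (R A) in
/-- The map `a ↦ ∑ a₁ ⊗ S a₂`; applying a functional to its second factor gives the action
`dualAction` of the dual. -/
noncomputable def comulAntipode : A →ₗ[R] A ⊗[R] A :=
  (antipode R).lTensor A ∘ₗ comul

lemma comulAntipode_apply (a : A) :
    comulAntipode R A a =
      ∑ i ∈ (ℛ R a).index, (ℛ R a).left i ⊗ₜ antipode R ((ℛ R a).right i) := by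
  simp [comulAntipode, ← (ℛ R a).eq]

lemma comulAntipode_mul (a b : A) :
    comulAntipode R A (a * b) = ∑ i ∈ (ℛ R b).index,
      (1 ⊗ₜ antipode R ((ℛ R b).right i)) * comulAntipode R A a * ((ℛ R b).left i ⊗ₜ 1) := by
  simp only [comulAntipode, LinearMap.comp_apply, Bialgebra.comul_mul]
  rw [← (ℛ R a).eq, ← (ℛ R b).eq]
  simp [Finset.sum_mul, Finset.mul_sum, antipode_mul_antidistrib]

lemma sum_comulAntipode_mul (a : A) :
    ∑ i ∈ (ℛ R a).index, comulAntipode R A ((ℛ R a).left i) * (1 ⊗ₜ (ℛ R a).right i) =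
      a ⊗ₜ 1 := by
  let ι₁ : A →ₐ[R] A ⊗[R] A := includeLeft
  let ι₂ : A →ₐ[R] A ⊗[R] A := includeRight
  have comulAntipode_eq : toConv ι₁.toLinearMap * toConv (ι₂.toLinearMap ∘ₗ antipode R) =
      toConv (comulAntipode R A) :=
    includeLeft_convMul_includeRight .id (antipode R)
  have h : toConv (comulAntipode R A) * toConv ι₂.toLinearMap = toConv ι₁.toLinearMap := by
    rw [← comulAntipode_eq, mul_assoc, algHom_comp_antipode_convMul, mul_one]
  simpa [(ℛ R a).convMul_apply, ι₁, ι₂] using congr($h a)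

lemma sum_comulAntipode_mul_mul (a b : A) :
    ∑ i ∈ (ℛ R a).index, comulAntipode R A ((ℛ R a).left i * b) * (1 ⊗ₜ (ℛ R a).right i) =
      (a ⊗ₜ 1) * comulAntipode R A b := by
  have comm (x y : A) : (x ⊗ₜ[R] (1 : A)) * ((1 : A) ⊗ₜ[R] y) = (1 ⊗ₜ y) * (x ⊗ₜ 1) := by simp
  simp only [comulAntipode_mul, Finset.sum_mul]
  rw [Finset.sum_comm]
  simp only [mul_assoc, comm]
  simp only [← mul_assoc _ _ (_ ⊗ₜ[R] (1 : A)), ← Finset.mul_sum, ← Finset.sum_mul,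
    sum_comulAntipode_mul]
  simp [comulAntipode_apply b, Finset.mul_sum]

/-- The right action `a ◁ f = ∑ f (S a₂) • a₁` of the dual of a Hopf algebra on the algebra,
written `dualAction f a`. Precomposing with the antipode turns the left coregular action into a
right one, compatible with left multiplication (`mul_dualAction`). -/
noncomputable def dualAction : Module.Dual R A →ₗ[R] A →ₗ[R] A where
  toFun f := (TensorProduct.rid R A).toLinearMap ∘ₗ f.lTensor A ∘ₗ comulAntipode R A
  map_add' f g := by
    rw [LinearMap.lTensor_add, LinearMap.add_comp, LinearMap.comp_add]
  map_smul' c f := by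
    rw [LinearMap.lTensor_smul, LinearMap.smul_comp, LinearMap.comp_smul, RingHom.id_apply]

lemma dualAction_apply (f : Module.Dual R A) (a : A) :
    dualAction f a = TensorProduct.rid R A (f.lTensor A (comulAntipode R A a)) := rfl

lemma dualAction_apply_sum (f : Module.Dual R A) (a : A) :
    dualAction f a =
      ∑ i ∈ (ℛ R a).index, f (antipode R ((ℛ R a).right i)) • (ℛ R a).left i := by
  simp [dualAction_apply, comulAntipode_apply]

lemma toConv_dualAction (f : Module.Dual R A) :
    toConv (dualAction f) =
      toConv .id * toConv (Algebra.linearMap R A ∘ₗ f ∘ₗ antipode R) := by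
  ext a
  rw [(ℛ R a).convMul_apply]
  simp [dualAction_apply_sum, Algebra.smul_def, Algebra.commutes]

lemma dualAction_counit : dualAction (counit : A →ₗ[R] R) = .id := by
  apply toConv_injective
  rw [toConv_dualAction, counit_comp_antipode, ← LinearMap.convOne_def, mul_one]

lemma dualAction_comp_dualAction (f g : Module.Dual R A) :
    dualAction g ∘ₗ dualAction f = dualAction (toConv f * toConv g).ofConv := by
  have comp_eq : toConv (dualAction g ∘ₗ dualAction f) =
      toConv (dualAction g) * toConv (Algebra.linearMap R A ∘ₗ f ∘ₗ antipode R) := by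
    ext a
    rw [(ℛ R a).convMul_apply]
    simp [dualAction_apply_sum f, ← Algebra.commutes, ← Algebra.smul_def]
  have convMul_comp_antipode :
      toConv (Algebra.linearMap R A ∘ₗ g ∘ₗ antipode R) *
          toConv (Algebra.linearMap R A ∘ₗ f ∘ₗ antipode R) =
        toConv (Algebra.linearMap R A ∘ₗ (toConv f * toConv g).ofConv ∘ₗ antipode R) := by
    ext a
    have := congr($(comul_comp_antipode (R := R)) a)
    simp only [LinearMap.comp_apply] at this
    rw [(ℛ R a).convMul_apply]
    simp [LinearMap.convMul_def, this, ← (ℛ R a).eq, mul_comm]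
  apply toConv_injective
  rw [comp_eq, toConv_dualAction, mul_assoc, convMul_comp_antipode, ← toConv_dualAction]

lemma counit_dualAction (f : Module.Dual R A) (a : A) :
    counit (R := R) (dualAction f a) = f (antipode R a) := by
  conv_rhs => rw [← sum_counit_smul (ℛ R a)]
  simp [dualAction_apply_sum, mul_comm]

lemma mul_dualAction (f : Module.Dual R A) (a b : A) :
    a * dualAction f b = ∑ i ∈ (ℛ R a).index,
      dualAction (f ∘ₗ LinearMap.mulRight R ((ℛ R a).right i)) ((ℛ R a).left i * b) := by
  let contract : A ⊗[R] A →ₗ[R] A := (TensorProduct.rid R A).toLinearMap ∘ₗ f.lTensor A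
  have contract_mul (x : A) (z : A ⊗[R] A) : contract ((x ⊗ₜ 1) * z) = x * contract z := by
    induction z with
    | zero => simp
    | add y z hy hz => simp only [mul_add, map_add, hy, hz]
    | tmul y z => simp [contract]
  have dualAction_mulRight (x y : A) : dualAction (f ∘ₗ LinearMap.mulRight R x) y =
      contract (comulAntipode R A y * (1 ⊗ₜ x)) := by
    simp [contract, dualAction_apply, comulAntipode_apply, Finset.sum_mul]
  simp only [dualAction_mulRight]
  rw [← map_sum, sum_comulAntipode_mul_mul, contract_mul]
  rfl

lemma mul_dualAction_of_mem_leftIntegrals (f : Module.Dual R A) (a : A) {t : A}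
    (ht : t ∈ leftIntegrals R A) :
    a * dualAction f t = dualAction (f ∘ₗ LinearMap.mulRight R a) t := by
  have comp_mulRight : f ∘ₗ LinearMap.mulRight R a = ∑ i ∈ (ℛ R a).index,
      counit (R := R) ((ℛ R a).left i) • (f ∘ₗ LinearMap.mulRight R ((ℛ R a).right i)) := by
    ext x
    conv_lhs => rw [← sum_counit_smul (ℛ R a)]
    simp [Finset.mul_sum]
  simp only [mul_dualAction, mem_leftIntegrals.mp ht, comp_mulRight, map_sum, map_smul,
    LinearMap.sum_apply, LinearMap.smul_apply]

lemma antipode_mul_of_mem_leftIntegrals {t : A} (ht : t ∈ leftIntegrals R A) (a : A) :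
    antipode R t * a = counit (R := R) a • antipode R t := by
  calc antipode R t * a
      = ∑ i ∈ (ℛ R a).index, antipode R ((ℛ R a).left i * t) * (ℛ R a).right i := by
        conv_lhs => rw [← sum_counit_smul (ℛ R a)]
        simp [mem_leftIntegrals.mp ht, Finset.mul_sum]
    _ = antipode R t * ∑ i ∈ (ℛ R a).index, antipode R ((ℛ R a).left i) * (ℛ R a).right i := by
        simp only [antipode_mul_antidistrib, mul_assoc, Finset.mul_sum]
    _ = counit (R := R) a • antipode R t := by
        rw [sum_antipode_mul_eq_smul, mul_smul_comm, mul_one]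

end HopfAlgebra

section DualBasis

variable {R M N P : Type*} [CommSemiring R] [AddCommMonoid M] [Module R M] [AddCommMonoid N]
  [Module R N] [AddCommMonoid P] [Module R P] [Module.Finite R M] [Module.Projective R M]

lemma linearMap_ext_smulRight {φ ψ : (M →ₗ[R] N) →ₗ[R] P}
    (h : ∀ (f : Module.Dual R M) (n : N), φ (f.smulRight n) = ψ (f.smulRight n)) : φ = ψ := by
  rw [← LinearEquiv.eq_comp_toLinearMap_iff (e₁₂ := dualTensorHomEquiv R M N)]
  exact TensorProduct.ext' h

end DualBasis

section FiniteProjective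

variable {R A : Type*} [CommSemiring R] [Semiring A] [HopfAlgebra R A]
  [Module.Finite R A] [Module.Projective R A]

/-- The contraction of an endomorphism against `dualAction`: under `End A ≃ A* ⊗ A` it sends
`f ⊗ a` to `a ◁ f`. It stands in for a sum over dual bases, `L ↦ ∑ L eᵢ ◁ eᵢ*`. -/
noncomputable def dualContract : (A →ₗ[R] A) →ₗ[R] A :=
  TensorProduct.lift dualAction ∘ₗ (dualTensorHomEquiv R A A).symm.toLinearMap

lemma dualContract_smulRight (f : Module.Dual R A) (a : A) :
    dualContract (f.smulRight a) = dualAction f a := by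
  have symm_smulRight : (dualTensorHomEquiv R A A).symm (f.smulRight a) = f ⊗ₜ a :=
    (LinearEquiv.symm_apply_eq _).mpr rfl
  rw [dualContract, LinearMap.comp_apply, LinearEquiv.coe_coe, symm_smulRight,
    TensorProduct.lift.tmul]

lemma mul_dualContract (a : A) (L : A →ₗ[R] A) :
    a * dualContract L = dualContract (∑ i ∈ (ℛ R a).index,
      LinearMap.mulLeft R ((ℛ R a).left i) ∘ₗ L ∘ₗ LinearMap.mulRight R ((ℛ R a).right i)) := by
  suffices h : LinearMap.mulLeft R a ∘ₗ dualContract = ∑ i ∈ (ℛ R a).index,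
      dualContract ∘ₗ LinearMap.compRight R (LinearMap.mulLeft R ((ℛ R a).left i)) ∘ₗ
        LinearMap.lcomp R A (LinearMap.mulRight R ((ℛ R a).right i)) by
    rw [map_sum]
    simpa [LinearMap.lcomp_apply'] using congr($h L)
  refine linearMap_ext_smulRight fun f x ↦ ?_
  have smulRight_comp (b c : A) :
      LinearMap.mulLeft R b ∘ₗ f.smulRight x ∘ₗ LinearMap.mulRight R c =
        (f ∘ₗ LinearMap.mulRight R c).smulRight (b * x) := by
    ext
    simp
  simp [LinearMap.lcomp_apply', dualContract_smulRight, mul_dualAction, smulRight_comp]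

lemma dualContract_dualContract (B : A →ₗ[R] A →ₗ[R] A) :
    dualContract (dualContract ∘ₗ B) = dualContract (TensorProduct.lift B.flip ∘ₗ comul) := by
  let lhs : (A →ₗ[R] A →ₗ[R] A) →ₗ[R] A := dualContract ∘ₗ LinearMap.compRight R dualContract
  let rhs : (A →ₗ[R] A →ₗ[R] A) →ₗ[R] A :=
    dualContract ∘ₗ LinearMap.lcomp R A comul ∘ₗ TensorProduct.uncurry (.id R) A A A ∘ₗ
      (LinearMap.lflip (R₀ := R)).toLinearMap
  suffices h : lhs = rhs from congr($h B)
  refine linearMap_ext_smulRight fun g L ↦ ?_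
  suffices h : lhs ∘ₗ LinearMap.smulRightₗ g = rhs ∘ₗ LinearMap.smulRightₗ g from congr($h L)
  refine linearMap_ext_smulRight fun f x ↦ ?_
  have dualContract_comp :
      dualContract ∘ₗ g.smulRight (f.smulRight x) = g.smulRight (dualAction f x) := by
    ext a
    simp [dualContract_smulRight]
  have lift_comp_comul : TensorProduct.lift (g.smulRight (f.smulRight x)).flip ∘ₗ comul =
      (toConv f * toConv g).ofConv.smulRight x := by
    ext a
    simp [LinearMap.convMul_def, ← (ℛ R a).eq, Finset.sum_smul, smul_smul, mul_comm]
  calc dualContract (dualContract ∘ₗ g.smulRight (f.smulRight x))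
      = (dualAction g ∘ₗ dualAction f) x := by
        rw [dualContract_comp, dualContract_smulRight, LinearMap.comp_apply]
    _ = dualContract (TensorProduct.lift (g.smulRight (f.smulRight x)).flip ∘ₗ comul) := by
        rw [dualAction_comp_dualAction, lift_comp_comul, dualContract_smulRight]

variable (R A) in
/-- The projection of `A` onto its left integrals. It is the projection `∑ m₀ ◁ S m₁` of a Hopf
module over `A*` onto its coinvariants, with the antipode of `A*` transposed to that of `A`. -/
noncomputable def integralProj : A →ₗ[R] A :=
  dualContract ∘ₗ LinearMap.lcomp R A (antipode R) ∘ₗ (LinearMap.mul R A).flip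

lemma integralProj_apply (a : A) :
    integralProj R A a = dualContract (LinearMap.mulRight R a ∘ₗ antipode R) := rfl

lemma integralProj_mem (a : A) : integralProj R A a ∈ leftIntegrals R A := by
  intro b
  have sum_comp : ∑ i ∈ (ℛ R b).index, LinearMap.mulLeft R ((ℛ R b).left i) ∘ₗ
      (LinearMap.mulRight R a ∘ₗ antipode R) ∘ₗ LinearMap.mulRight R ((ℛ R b).right i) =
        counit (R := R) b • (LinearMap.mulRight R a ∘ₗ antipode R) := by
    ext x
    have h := congr($(sum_mul_antipode_eq_smul (R := R) (ℛ R b)) * (antipode R x * a))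
    simpa [Finset.sum_mul, mul_assoc, antipode_mul_antidistrib] using h
  rw [integralProj_apply, mul_dualContract, sum_comp, map_smul]

lemma dualContract_integralProj (a : A) :
    dualContract (integralProj R A ∘ₗ LinearMap.mulRight R a) = a := by
  let B : A →ₗ[R] A →ₗ[R] A :=
    LinearMap.lcomp R A (antipode R) ∘ₗ (LinearMap.mul R A).flip ∘ₗ LinearMap.mulRight R a
  have lift_comp_comul : TensorProduct.lift B.flip ∘ₗ comul = (counit (R := R)).smulRight a := by
    ext x
    have h := congr($(sum_antipode_mul_eq_smul (R := R) (ℛ R x)) * a)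
    simpa [← (ℛ R x).eq, B, Finset.sum_mul, mul_assoc] using h
  calc dualContract (integralProj R A ∘ₗ LinearMap.mulRight R a)
      = dualContract (dualContract ∘ₗ B) := rfl
    _ = a := by
        rw [dualContract_dualContract, lift_comp_comul, dualContract_smulRight, dualAction_counit,
          LinearMap.id_apply]

lemma integralProj_dualAction (f : Module.Dual R A) {t : A} (ht : t ∈ leftIntegrals R A) :
    integralProj R A (dualAction f t) = f 1 • t := by
  let B : A →ₗ[R] A →ₗ[R] A :=
    (LinearMap.smulRightₗ (R := R)).flip t ∘ₗ f.compRight R ∘ₗ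
      (LinearMap.mul R A).flip ∘ₗ antipode R
  have mulRight_comp : LinearMap.mulRight R (dualAction f t) ∘ₗ antipode R =
      dualContract ∘ₗ B := by
    ext x
    exact (mul_dualAction_of_mem_leftIntegrals f _ ht).trans (dualContract_smulRight _ _).symm
  have lift_comp_comul :
      TensorProduct.lift B.flip ∘ₗ comul = (counit (R := R)).smulRight (f 1 • t) := by
    ext x
    have h := congr(f $(sum_mul_antipode_eq_smul (R := R) (ℛ R x)) • t)
    simpa [← (ℛ R x).eq, B, Finset.sum_smul, mul_smul] using h
  rw [integralProj_apply, mulRight_comp, dualContract_dualContract, lift_comp_comul,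
    dualContract_smulRight, dualAction_counit, LinearMap.id_apply]

lemma integralProj_mul_dualContract (a : A) (L : A →ₗ[R] leftIntegrals R A) :
    integralProj R A (a * dualContract ((leftIntegrals R A).subtype ∘ₗ L)) = L a := by
  suffices h : integralProj R A ∘ₗ LinearMap.mulLeft R a ∘ₗ dualContract ∘ₗ
      LinearMap.compRight R (leftIntegrals R A).subtype =
        (leftIntegrals R A).subtype ∘ₗ LinearMap.applyₗ a from
    congr($h L)
  refine linearMap_ext_smulRight fun f t ↦ ?_
  have subtype_comp :
      (leftIntegrals R A).subtype ∘ₗ f.smulRight t = f.smulRight (t : A) := rfl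
  simp [subtype_comp, dualContract_smulRight, mul_dualAction_of_mem_leftIntegrals,
    integralProj_dualAction]

variable (R A) in
/-- The fundamental theorem of Hopf modules for `A` as a Hopf module over `A*`, with `A* ⊗ I`
written as the space of linear maps from `A` to the left integrals `I`. -/
noncomputable def homLeftIntegralsEquiv : (A →ₗ[R] leftIntegrals R A) ≃ₗ[R] A where
  __ := dualContract ∘ₗ LinearMap.compRight R (leftIntegrals R A).subtype
  invFun a := (integralProj R A ∘ₗ LinearMap.mulRight R a).codRestrict _ fun _ ↦ integralProj_mem _
  left_inv L := by
    ext a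
    exact integralProj_mul_dualContract a L
  right_inv a := dualContract_integralProj a

variable (R A) in
/-- The fundamental theorem of Hopf modules in tensor form, `f ⊗ t ↦ t ◁ f`. -/
noncomputable def dualTensorLeftIntegralsEquiv : Module.Dual R A ⊗[R] leftIntegrals R A ≃ₗ[R] A :=
  dualTensorHomEquiv R A (leftIntegrals R A) ≪≫ₗ homLeftIntegralsEquiv R A

lemma dualTensorLeftIntegralsEquiv_tmul (f : Module.Dual R A) (t : leftIntegrals R A) :
    dualTensorLeftIntegralsEquiv R A (f ⊗ₜ t) = dualAction f (t : A) :=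
  dualContract_smulRight f (t : A)

lemma dualTensorLeftIntegralsEquiv_symm_mul (a b : A) :
    (dualTensorLeftIntegralsEquiv R A).symm (a * b) =
      (LinearMap.lcomp R R (LinearMap.mulRight R a)).rTensor (leftIntegrals R A)
        ((dualTensorLeftIntegralsEquiv R A).symm b) := by
  obtain ⟨w, rfl⟩ := (dualTensorLeftIntegralsEquiv R A).surjective b
  rw [LinearEquiv.symm_apply_apply, LinearEquiv.symm_apply_eq]
  suffices h : LinearMap.mulLeft R a ∘ₗ (dualTensorLeftIntegralsEquiv R A).toLinearMap =
      (dualTensorLeftIntegralsEquiv R A).toLinearMap ∘ₗ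
        (LinearMap.lcomp R R (LinearMap.mulRight R a)).rTensor _ from
    congr($h w)
  ext f t
  simpa [LinearMap.lcomp_apply', dualTensorLeftIntegralsEquiv_tmul] using
    mul_dualAction_of_mem_leftIntegrals f a t.2

end FiniteProjective

section Invertible

lemma invertible_of_forall_smul_eq {R M N : Type*} [CommSemiring R] [AddCommMonoid M] [Module R M]
    [AddCommMonoid N] [Module R N] {p : N ⊗[R] M →ₗ[R] R} {z : N ⊗[R] M} (hz : p z = 1)
    (h : ∀ y, p y • z = y) : Module.Invertible R M :=
  .right <| LinearEquiv.ofLinearMap p (LinearMap.toSpanSingleton R _ z)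
    (LinearMap.ext_ring (by simpa using hz)) (LinearMap.ext h)

variable {R A : Type*} [CommSemiring R] [Semiring A] [HopfAlgebra R A]

variable (R A) in
/-- The pairing of functionals on `A` with left integrals `t` by `f ↦ f (S t)`, as a map to the
dual of the left integrals. -/
noncomputable def antipodeRestrict : Module.Dual R A →ₗ[R] Module.Dual R (leftIntegrals R A) :=
  LinearMap.lcomp R R (antipode R ∘ₗ (leftIntegrals R A).subtype)

lemma antipodeRestrict_comp_mulRight (f : Module.Dual R A) (a : A) :
    antipodeRestrict R A (f ∘ₗ LinearMap.mulRight R a) =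
      counit (R := R) a • antipodeRestrict R A f := by
  ext t
  simp [antipodeRestrict, antipode_mul_of_mem_leftIntegrals t.2]

end Invertible

theorem stmt10_general (R A : Type*) [CommSemiring R] [Semiring A] [HopfAlgebra R A]
    [Module.Finite R A] [Module.Projective R A] : Module.Invertible R (leftIntegrals R A) := by
  let Φ := dualTensorLeftIntegralsEquiv R A
  let ρ := antipodeRestrict R A
  let q := ρ.rangeRestrict.rTensor (leftIntegrals R A)
  let p : LinearMap.range ρ ⊗[R] leftIntegrals R A →ₗ[R] R :=
    contractLeft R (leftIntegrals R A) ∘ₗ (LinearMap.range ρ).subtype.rTensor _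
  have p_comp_q : p ∘ₗ q = counit ∘ₗ Φ.toLinearMap := by
    ext f t
    exact (counit_dualAction f t.1).symm.trans
      congr(counit $(dualTensorLeftIntegralsEquiv_tmul f t)).symm
  have q_mul (a x : A) : q (Φ.symm (a * x)) = counit (R := R) a • q (Φ.symm x) := by
    have restrict_comp : ρ.rangeRestrict ∘ₗ LinearMap.lcomp R R (LinearMap.mulRight R a) =
        counit (R := R) a • ρ.rangeRestrict :=
      LinearMap.ext fun f ↦ Subtype.ext (antipodeRestrict_comp_mulRight f a)
    rw [dualTensorLeftIntegralsEquiv_symm_mul, ← LinearMap.comp_apply, ← LinearMap.rTensor_comp,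
      restrict_comp, LinearMap.rTensor_smul, LinearMap.smul_apply]
  have p_q (w) : p (q w) = counit (R := R) (Φ w) := congr($p_comp_q w)
  refine invertible_of_forall_smul_eq (p := p) (z := q (Φ.symm 1)) ?_ fun y ↦ ?_
  · rw [p_q, Φ.apply_symm_apply, Bialgebra.counit_one]
  · obtain ⟨w, rfl⟩ := LinearMap.rTensor_surjective _ ρ.surjective_rangeRestrict y
    rw [p_q, ← q_mul, mul_one, Φ.symm_apply_apply]

/-- Proposition A.14(i) of the paper; uniqueness of left
integrals. For a finite-dimensional Hopf algebra `A` over a field `F`, the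
space of left integrals `A^A = {a ∈ A : b·a = ε(b)·a for all b ∈ A}` is
one-dimensional. -/
theorem stmt10 (F : Type*) [Field F] (A : Type*) [Ring A] [HopfAlgebra F A]
    [FiniteDimensional F A] :
    Module.finrank F (leftIntegrals F A) = 1 := by
  have := stmt10_general F A
  exact Module.Invertible.finrank_eq_one F (leftIntegrals F A)
end

section
/- Let F be a field, let A be a finite-dimensional Hopf algebra over F, and let e ∈ A be an idempotent (e·e = e). Then dim_F (Ae) = dim_F (eA), where Ae = {a·e : a ∈ A} and eA = {e·a : a ∈ A} are F-subspaces of A. -/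
/-!
The tensor product `A ⊗ A*` of a finite-dimensional Hopf algebra with its convolution dual is a
Frobenius algebra for the evaluation form `a ⊗ f ↦ f a`. Indeed, evaluating `(x ⊗ f) * t` gives
`f ((id * D (P t)) x)`, where `*` on the right is convolution, `D : A ⊗ A* → Hom(A, A)` is the
canonical isomorphism and `P (a ⊗ g) = ∑ a₁ ⊗ g(· a₂)`; the antipode makes both `P` and
convolution by `id` invertible, so `t = 0` as soon as all these values vanish.

In a Frobenius algebra, `v ↦ (u ↦ l (u * v))` intertwines left multiplication by `b` with the
transpose of right multiplication by `b`, so the two multiplications have the same rank. For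
`b = a ⊗ 1` these ranks are `dim (aA) * dim A*` and `dim (Aa) * dim A*`.
-/

set_option maxSynthPendingDepth 3

open Coalgebra TensorProduct WithConv

section Rank

variable {K V W : Type*} [Field K] [AddCommGroup V] [Module K V] [AddCommGroup W] [Module K W]

lemma finrank_range_rTensor {V' : Type*} [AddCommGroup V'] [Module K V'] (f : V →ₗ[K] V') :
    Module.finrank K (f.rTensor W).range = Module.finrank K f.range * Module.finrank K W := by
  have hsurj : (f.rangeRestrict.rTensor W).range = ⊤ := LinearMap.range_eq_top.2
    (LinearMap.rTensor_surjective W f.surjective_rangeRestrict)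
  have hinj : Function.Injective (f.range.subtype.rTensor W) :=
    Module.Flat.rTensor_preserves_injective_linearMap _ f.range.injective_subtype
  have hf : f.rTensor W = f.range.subtype.rTensor W ∘ₗ f.rangeRestrict.rTensor W := by
    rw [← LinearMap.rTensor_comp]; rfl
  rw [hf, LinearMap.range_comp_of_range_eq_top _ hsurj, LinearMap.finrank_range_of_inj hinj,
    Module.finrank_tensorProduct]

lemma finrank_range_eq_of_comp_eq_comp {f : Module.End K V} {g : Module.End K W} {T : V →ₗ[K] W}
    (hT : Function.Bijective T) (h : T ∘ₗ f = g ∘ₗ T) :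
    Module.finrank K f.range = Module.finrank K g.range := by
  rw [← LinearMap.range_comp_of_range_eq_top g (LinearMap.range_eq_top.2 hT.2), ← h,
    LinearMap.range_comp, (Submodule.equivMapOfInjective T hT.1 f.range).finrank_eq]

lemma finrank_range_mulRight_eq_mulLeft_of_separatingRight {B : Type*} [Ring B] [Algebra K B]
    [FiniteDimensional K B] {l : Module.Dual K B}
    (hl : ((LinearMap.mul K B).compr₂ l).SeparatingRight) (b : B) :
    Module.finrank K (LinearMap.mulRight K b).range =
      Module.finrank K (LinearMap.mulLeft K b).range := by
  have hinj : Function.Injective ((LinearMap.mul K B).compr₂ l).flip :=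
    LinearMap.ker_eq_bot.1 (LinearMap.separatingRight_iff_flip_ker_eq_bot.1 hl)
  have hbij : Function.Bijective ((LinearMap.mul K B).compr₂ l).flip :=
    ⟨hinj, (LinearMap.injective_iff_surjective_of_finrank_eq_finrank
      Subspace.dual_finrank_eq.symm).1 hinj⟩
  rw [← LinearMap.finrank_range_dualMap_eq_finrank_range]
  refine (finrank_range_eq_of_comp_eq_comp hbij ?_).symm
  ext v u
  simp [mul_assoc]

end Rank

/-- The dual of a coalgebra, with its convolution algebra structure. -/
abbrev ConvDual (R C : Type*) [CommSemiring R] [AddCommMonoid C] [Module R C] : Type _ :=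
  WithConv (C →ₗ[R] R)

section ConvDual

instance ConvDual.finiteDimensional {F C : Type*} [Field F] [AddCommGroup C] [Module F C]
    [FiniteDimensional F C] : FiniteDimensional F (ConvDual F C) :=
  Module.Finite.equiv (WithConv.linearEquiv F (Module.Dual F C)).symm

instance ConvDual.nontrivial {R A : Type*} [CommSemiring R] [Nontrivial R] [Semiring A]
    [Bialgebra R A] : Nontrivial (ConvDual R A) :=
  ⟨1, 0, fun h ↦ one_ne_zero (α := R) (by simpa using congr($h (1 : A)))⟩

variable (R C M : Type*) [CommSemiring R] [AddCommMonoid C] [Module R C] [AddCommMonoid M]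
  [Module R M]

/-- The canonical map `M ⊗ C* → Hom(C, M)` sending `m ⊗ f` to `c ↦ f c • m`; its target carries the
convolution structure when `M` is an algebra and `C` a coalgebra. -/
noncomputable def tensorConvDualHom : M ⊗[R] ConvDual R C →ₗ[R] WithConv (C →ₗ[R] M) :=
  lift (LinearMap.mk₂ R (fun m f ↦ toConv (f.ofConv.smulRight m))
    (fun _ _ _ ↦ by ext; simp) (fun _ _ _ ↦ by ext; simp [smul_comm (_ : R) (_ : R)])
    (fun _ _ _ ↦ by ext; simp [add_smul]) (fun _ _ _ ↦ by ext; simp [mul_smul]))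

/-- The evaluation form on `C ⊗ C*`, sending `c ⊗ f` to `f c`. It is the Frobenius form when `C` is
a finite-dimensional Hopf algebra. -/
noncomputable def convDualEval : C ⊗[R] ConvDual R C →ₗ[R] R :=
  lift (LinearMap.mk₂ R (fun c f ↦ f c) (by simp) (by simp) (by simp) (by simp))

variable {R C M}

@[simp]
lemma tensorConvDualHom_tmul (m : M) (f : ConvDual R C) (c : C) :
    tensorConvDualHom R C M (m ⊗ₜ f) c = f c • m := rfl

@[simp]
lemma convDualEval_tmul (c : C) (f : ConvDual R C) : convDualEval R C (c ⊗ₜ f) = f c := rfl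

end ConvDual

lemma tensorConvDualHom_injective {R C M : Type*} [CommRing R] [AddCommGroup C] [Module R C]
    [AddCommGroup M] [Module R M] [Module.Finite R C] [Module.Projective R C] :
    Function.Injective (tensorConvDualHom R C M) := by
  let e : M ⊗[R] ConvDual R C ≃ₗ[R] WithConv (C →ₗ[R] M) :=
    (TensorProduct.congr (.refl R M) (WithConv.linearEquiv R (C →ₗ[R] R))) ≪≫ₗ
      TensorProduct.comm R M (Module.Dual R C) ≪≫ₗ dualTensorHomEquiv R C M ≪≫ₗ
      (WithConv.linearEquiv R (C →ₗ[R] M)).symm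
  have he : tensorConvDualHom R C M = e.toLinearMap := by ext; simp [e]
  exact he ▸ e.injective

section Twist

variable {R C V : Type*} [CommSemiring R] [AddCommMonoid C] [Module R C] [Coalgebra R C]
  [AddCommMonoid V] [Module R V]

/-- The operator `c ⊗ v ↦ ∑ c₁ ⊗ σ(c₂) v` on `C ⊗ V` attached to a linear map `σ : C → End V`, used
to turn convolution invertibility of `σ` into invertibility of an operator. -/
noncomputable def comulTwist (σ : WithConv (C →ₗ[R] Module.End R V)) : Module.End R (C ⊗[R] V) :=
  lift (LinearMap.mk₂ R (fun c v ↦ (σ.ofConv.flip v).lTensor C (comul c))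
    (by simp) (by simp) (by simp [LinearMap.lTensor_add]) (by simp [LinearMap.lTensor_smul]))

lemma comulTwist_tmul (σ : WithConv (C →ₗ[R] Module.End R V)) (c : C) (v : V) :
    comulTwist σ (c ⊗ₜ v) = (σ.ofConv.flip v).lTensor C (comul c) := rfl

lemma comulTwist_one : comulTwist (1 : WithConv (C →ₗ[R] Module.End R V)) = 1 := by
  ext c v
  have h : (1 : WithConv (C →ₗ[R] Module.End R V)).ofConv.flip v =
      LinearMap.toSpanSingleton R V v ∘ₗ counit := by
    ext; simp [Algebra.algebraMap_eq_smul_one]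
  simp [comulTwist_tmul, h, LinearMap.lTensor_comp_apply]

lemma comulTwist_mul (σ τ : WithConv (C →ₗ[R] Module.End R V)) :
    comulTwist (σ * τ) = comulTwist σ * comulTwist τ := by
  ext c v
  let k : C ⊗[R] C →ₗ[R] V := lift (σ.ofConv.compl₂ (τ.ofConv.flip v))
  have hk : (σ * τ).ofConv.flip v = k ∘ₗ comul := by
    ext d
    rw [LinearMap.comp_apply, ← (ℛ R d).eq, LinearMap.flip_apply, (ℛ R d).convMul_apply]
    simp [k]
  have hσ : comulTwist σ ∘ₗ (τ.ofConv.flip v).lTensor C =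
      k.lTensor C ∘ₗ (TensorProduct.assoc R C C C).toLinearMap ∘ₗ comul.rTensor C := by
    ext x y
    suffices (σ.ofConv.flip (τ y v)).lTensor C (comul x) =
        k.lTensor C (TensorProduct.assoc R C C C (comul x ⊗ₜ y)) by simpa [comulTwist_tmul]
    rw [← (ℛ R x).eq]
    simp [k, sum_tmul]
  calc comulTwist (σ * τ) (c ⊗ₜ v)
      = k.lTensor C (comul.lTensor C (comul c)) := by
        rw [comulTwist_tmul, hk, LinearMap.lTensor_comp_apply]
    _ = k.lTensor C (TensorProduct.assoc R C C C (comul.rTensor C (comul c))) := by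
        rw [coassoc_apply]
    _ = comulTwist σ (comulTwist τ (c ⊗ₜ v)) := (LinearMap.congr_fun hσ (comul c)).symm

variable (R C V) in
/-- `comulTwist` as a homomorphism from the convolution monoid `Hom(C, End V)` to `End (C ⊗ V)`. -/
noncomputable def comulTwistHom :
    WithConv (C →ₗ[R] Module.End R V) →* Module.End R (C ⊗[R] V) where
  toFun := comulTwist
  map_one' := comulTwist_one
  map_mul' := comulTwist_mul

end Twist

lemma isUnit_toConv_algHom {R A B : Type*} [CommSemiring R] [Semiring A] [HopfAlgebra R A]
    [Semiring B] [Algebra R B] (ρ : A →ₐ[R] B) : IsUnit (toConv ρ.toLinearMap) := by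
  have hone : toConv (ρ.toLinearMap ∘ₗ (1 : WithConv (A →ₗ[R] A)).ofConv) = 1 := by
    ext; simp
  have hmul {f g : WithConv (A →ₗ[R] A)} (h : f * g = 1) :
      toConv (ρ.toLinearMap ∘ₗ f.ofConv) * toConv (ρ.toLinearMap ∘ₗ g.ofConv) = 1 := by
    rw [← hone, ← h, LinearMap.algHom_comp_convMul_distrib, toConv_ofConv]
  exact ⟨⟨_, _, hmul LinearMap.id_mul_antipode, hmul LinearMap.antipode_mul_id⟩, rfl⟩

section RightTranslation

variable (R A M : Type*) [CommSemiring R] [Semiring A] [AddCommMonoid M] [Module R M]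

/-- The right translation representation of an algebra `A` on the linear maps out of `A`, in which
`a` sends `f` to `x ↦ f (x * a)`. -/
noncomputable def rightTranslation [Algebra R A] :
    A →ₐ[R] Module.End R (WithConv (A →ₗ[R] M)) :=
  .ofLinearMap (LinearMap.mk₂ R (fun a f ↦ toConv (f.ofConv ∘ₗ LinearMap.mulRight R a))
    (fun _ _ _ ↦ by ext; simp [mul_add]) (fun _ _ _ ↦ by ext; simp)
    (fun _ _ _ ↦ by ext; simp) (fun _ _ _ ↦ by ext; simp))
    (by ext; simp) (fun _ _ ↦ by ext; simp [mul_assoc])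

@[simp]
lemma rightTranslation_apply [Algebra R A] (a x : A) (f : WithConv (A →ₗ[R] M)) :
    rightTranslation R A M a f x = f (x * a) := rfl

lemma comulTwist_rightTranslation_injective [HopfAlgebra R A] :
    Function.Injective (comulTwist (toConv (rightTranslation R A M).toLinearMap)) :=
  ((Module.End.isUnit_iff _).1 ((isUnit_toConv_algHom (rightTranslation R A M)).map
    (comulTwistHom R A _))).1

variable {R A M}

lemma convDualEval_tmul_mul [Bialgebra R A] (x : A) (f : ConvDual R A)
    (t : A ⊗[R] ConvDual R A) :
    convDualEval R A ((x ⊗ₜ f) * t) =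
      f (((toConv LinearMap.id : WithConv (A →ₗ[R] A)) * tensorConvDualHom R A A
        (comulTwist (toConv (rightTranslation R A R).toLinearMap) t)) x) := by
  induction t with
  | zero => simp
  | add s t hs ht => simp only [mul_add, map_add, hs, ht, ofConv_add, LinearMap.add_apply]
  | tmul a g =>
    rw [Algebra.TensorProduct.tmul_mul_tmul, convDualEval_tmul, LinearMap.convMul_apply,
      LinearMap.convMul_apply, Bialgebra.comul_mul, comulTwist_tmul, ← (ℛ R x).eq, ← (ℛ R a).eq]
    simp [Finset.sum_mul_sum, tmul_sum, mul_comm (g _)]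

end RightTranslation

lemma separatingRight_mul_compr₂_convDualEval {F A : Type*} [Field F] [Ring A] [HopfAlgebra F A]
    [FiniteDimensional F A] :
    ((LinearMap.mul F (A ⊗[F] ConvDual F A)).compr₂ (convDualEval F A)).SeparatingRight := by
  intro t ht
  let ρ := rightTranslation F A F
  have hconv : toConv LinearMap.id *
      tensorConvDualHom F A A (comulTwist (toConv ρ.toLinearMap) t) = 0 := by
    ext x
    refine (Module.forall_dual_apply_eq_zero_iff F _).1 fun f ↦ ?_
    simpa using (convDualEval_tmul_mul x (toConv f) t).symm.trans (ht _)
  have hhom := (isUnit_toConv_algHom (AlgHom.id F A)).mul_right_eq_zero.1 hconv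
  have htwist := (map_eq_zero_iff _ tensorConvDualHom_injective).1 hhom
  exact (map_eq_zero_iff _ (comulTwist_rightTranslation_injective F A F)).1 htwist

theorem stmt11_general (F : Type*) [Field F] (A : Type*) [Ring A] [HopfAlgebra F A]
    [FiniteDimensional F A] (a : A) :
    Module.finrank F (LinearMap.range (LinearMap.mulRight F a)) =
      Module.finrank F (LinearMap.range (LinearMap.mulLeft F a)) := by
  have hleft : LinearMap.mulLeft F (a ⊗ₜ[F] (1 : ConvDual F A)) =
      (LinearMap.mulLeft F a).rTensor (ConvDual F A) :=
    TensorProduct.ext' fun x f ↦ by simp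
  have hright : LinearMap.mulRight F (a ⊗ₜ[F] (1 : ConvDual F A)) =
      (LinearMap.mulRight F a).rTensor (ConvDual F A) :=
    TensorProduct.ext' fun x f ↦ by simp
  have h := finrank_range_mulRight_eq_mulLeft_of_separatingRight
    (separatingRight_mul_compr₂_convDualEval (F := F) (A := A)) (a ⊗ₜ[F] (1 : ConvDual F A))
  rw [hleft, hright, finrank_range_rTensor, finrank_range_rTensor] at h
  have hpos : 0 < Module.finrank F (ConvDual F A) := Module.finrank_pos
  exact Nat.eq_of_mul_eq_mul_right hpos h

/-- Corollary A.15 of the paper. For an idempotent `e` in a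
finite-dimensional Hopf algebra `A` over a field `F`, one has
`dim_F (Ae) = dim_F (eA)`, where `Ae` is the image of the `F`-linear map
`x ↦ x·e` and `eA` is the image of `x ↦ e·x`. -/
theorem stmt11 (F : Type*) [Field F] (A : Type*) [Ring A] [HopfAlgebra F A]
    [FiniteDimensional F A] (e : A) (he : e * e = e) :
    Module.finrank F (LinearMap.range (LinearMap.mulRight F e)) =
      Module.finrank F (LinearMap.range (LinearMap.mulLeft F e)) :=
  stmt11_general F A e
end

section
/- Let F be an algebraically closed field, let G be a finite group, and let V be a finite-dimensional faithful representation of G over F (i.e., the group homomorphism G → GL(V) is injective). Then V is tensor-rich: every simple FG-module is a composition factor of some tensor power V^{⊗k}. -/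
/-!
The matrix coefficients `g ↦ η (ρ g v)` of a faithful representation separate the points of `G`, so
the algebra they generate is all of `G → F` when `G` is finite. A product of matrix coefficients of
`V` is a matrix coefficient of a tensor power of `V`, hence the matrix coefficients of all tensor
powers span `G → F`: no nonzero element of `F[G]` annihilates every tensor power. Since `F[G]` is
Artinian, a given simple quotient `F[G] → S` already comes from one tensor power: let `I` be a left
ideal minimal among those mapping onto `S`, and pick `w` in a tensor power with `I w ≠ 0`. By
minimality the kernel of `I → I w` maps to zero in `S`, so `S` is a quotient of `I w`.
-/

open CategoryTheory MonoidalCategory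

/-- The `n`-th tensor power of a representation `X` of `G` over `k`, with the
diagonal `G`-action; `X^{⊗0}` is the trivial one-dimensional representation
(the monoidal unit of `Rep k G`). -/
noncomputable def repTensorPow (k G : Type) [CommRing k] [Monoid G] (X : Rep k G) :
    ℕ → Rep k G
  | 0 => 𝟙_ (Rep k G)
  | n + 1 => repTensorPow k G X n ⊗ X

/-- `S` is a composition factor of the `R`-module `W`: there are submodules
`N ⊆ M ⊆ W` with `M/N ≅ S`. -/
def IsCompositionFactor (R : Type*) [Ring R] (S : Type*) [AddCommGroup S] [Module R S]
    (W : Type*) [AddCommGroup W] [Module R W] : Prop :=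
  ∃ N M : Submodule R W, N ≤ M ∧
    Nonempty ((↥M ⧸ Submodule.comap M.subtype N) ≃ₗ[R] S)

/-- A representation `X ∈ Rep k G` is *tensor-rich* if every simple module over
the group algebra `k[G]` is a composition factor of some tensor power
`X^{⊗n}`. -/
def TensorRich (k G : Type) [CommRing k] [Monoid G] (X : Rep k G) : Prop :=
  ∀ (S : Type) [AddCommGroup S] [Module (MonoidAlgebra k G) S],
    IsSimpleModule (MonoidAlgebra k G) S →
      ∃ n : ℕ,
        IsCompositionFactor (MonoidAlgebra k G) S ((repTensorPow k G X n).ρ.asModule)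

section CompositionFactor

variable {R S M W : Type*} [Ring R] [AddCommGroup S] [Module R S] [AddCommGroup M] [Module R M]
  [AddCommGroup W] [Module R W]

theorem isCompositionFactor_of_surjective {P : Submodule R W} (f : P →ₗ[R] S)
    (hf : Function.Surjective f) : IsCompositionFactor R S W := by
  refine ⟨(LinearMap.ker f).map P.subtype, P, Submodule.map_subtype_le P _, ⟨?_⟩⟩
  have comap_map_ker : ((LinearMap.ker f).map P.subtype).comap P.subtype = LinearMap.ker f :=
    Submodule.comap_map_eq_of_injective P.injective_subtype _
  exact Submodule.quotEquivOfEq _ _ comap_map_ker ≪≫ₗ f.quotKerEquivOfSurjective hf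

theorem isCompositionFactor_of_ker_le (f : M →ₗ[R] S) (hf : Function.Surjective f)
    (φ : M →ₗ[R] W) (h : LinearMap.ker φ ≤ LinearMap.ker f) : IsCompositionFactor R S W := by
  let f' : LinearMap.range φ →ₗ[R] S :=
    (LinearMap.ker φ).liftQ f h ∘ₗ φ.quotKerEquivRange.symm.toLinearMap
  have hf' : Function.Surjective f' :=
    (LinearMap.range_eq_top.mp ((Submodule.range_liftQ _ f h).trans
      (LinearMap.range_eq_top.mpr hf))).comp φ.quotKerEquivRange.symm.surjective
  exact isCompositionFactor_of_surjective f' hf'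

theorem exists_isCompositionFactor_of_iInf_ker_le [IsArtinian R M] [IsSimpleModule R S]
    {f : M →ₗ[R] S} (hf : f ≠ 0) {ι : Type*} {W : ι → Type*} [∀ i, AddCommGroup (W i)]
    [∀ i, Module R (W i)] (φ : ∀ i, M →ₗ[R] W i)
    (hφ : ⨅ i, LinearMap.ker (φ i) ≤ LinearMap.ker f) : ∃ i, IsCompositionFactor R S (W i) := by
  obtain ⟨I, hIf, hmin⟩ := (wellFounded_lt (α := Submodule R M)).has_min
    {I | ¬ I ≤ LinearMap.ker f} ⟨⊤, fun h => hf (LinearMap.ker_eq_top.mp (top_le_iff.mp h))⟩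
  have not_le_iInf_ker : ¬ I ≤ ⨅ i, LinearMap.ker (φ i) := fun h => hIf (h.trans hφ)
  obtain ⟨i, hi⟩ : ∃ i, ¬ I ≤ LinearMap.ker (φ i) := by simpa [le_iInf_iff] using not_le_iInf_ker
  have inf_ker_le : I ⊓ LinearMap.ker (φ i) ≤ LinearMap.ker f := by
    by_contra h
    exact hmin _ h (inf_lt_left.mpr hi)
  refine ⟨i, isCompositionFactor_of_ker_le (f.domRestrict I) ?_ ((φ i).domRestrict I) ?_⟩
  · exact LinearMap.surjective_of_ne_zero fun h => hIf fun x hx => LinearMap.congr_fun h ⟨x, hx⟩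
  · exact fun x hx => inf_ker_le ⟨x.2, hx⟩

theorem exists_isCompositionFactor_of_iInf_annihilator_le [IsArtinianRing R]
    [IsSimpleModule R S] {ι : Type*} {W : ι → Type*} [∀ i, AddCommGroup (W i)]
    [∀ i, Module R (W i)] (h : ⨅ i, Module.annihilator R (W i) ≤ Module.annihilator R S) :
    ∃ i, IsCompositionFactor R S (W i) := by
  have := IsSimpleModule.nontrivial R S
  obtain ⟨s, hs⟩ := exists_ne (0 : S)
  have toSpanSingleton_ne_zero : LinearMap.toSpanSingleton R S s ≠ 0 := fun h0 =>
    hs (by simpa using LinearMap.congr_fun h0 1)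
  have iInf_ker_le : ⨅ p : Σ i, W i, LinearMap.ker (LinearMap.toSpanSingleton R (W p.1) p.2) ≤
      LinearMap.ker (LinearMap.toSpanSingleton R S s) := by
    intro a ha
    have mem_iInf_annihilator : a ∈ ⨅ i, Module.annihilator R (W i) :=
      (Submodule.mem_iInf _).mpr fun i => Module.mem_annihilator.mpr fun w =>
        (Submodule.mem_iInf _).mp ha ⟨i, w⟩
    exact Module.mem_annihilator.mp (h mem_iInf_annihilator) s
  obtain ⟨p, hp⟩ := exists_isCompositionFactor_of_iInf_ker_le toSpanSingleton_ne_zero _ iInf_ker_le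
  exact ⟨p.1, hp⟩

end CompositionFactor

section SeparatesPoints

variable {X K : Type*} [Finite X] [Field K] {A : Subalgebra K (X → K)}

theorem single_one_mem_of_separatesPoints [DecidableEq X]
    (hA : (A : Set (X → K)).SeparatesPoints) (x : X) : Pi.single x 1 ∈ A := by
  have := Fintype.ofFinite X
  have exists_vanishing (y : X) : ∃ f ∈ A, f x = 1 ∧ (y ≠ x → f y = 0) := by
    by_cases hyx : y = x
    · exact ⟨1, A.one_mem, rfl, fun h => absurd hyx h⟩
    obtain ⟨f, hfA, hf⟩ := hA hyx
    refine ⟨(f x - f y)⁻¹ • (f - algebraMap K _ (f y)),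
      A.smul_mem (A.sub_mem hfA (A.algebraMap_mem _)) _, ?_, fun _ => ?_⟩
    · simp [inv_mul_cancel₀ (sub_ne_zero.mpr (Ne.symm hf))]
    · simp
  choose f hfA hfx hf using exists_vanishing
  have prod_eq_single : ∏ y, f y = Pi.single x 1 := by
    ext z
    rw [Finset.prod_apply]
    rcases eq_or_ne z x with rfl | hzx
    · simp [hfx]
    · rw [Pi.single_eq_of_ne hzx]
      exact Finset.prod_eq_zero (Finset.mem_univ z) (hf z hzx)
  exact prod_eq_single ▸ A.prod_mem fun y _ => hfA y

theorem subalgebra_eq_top_of_separatesPoints (hA : (A : Set (X → K)).SeparatesPoints) :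
    A = ⊤ := by
  classical
  rw [← Algebra.toSubmodule_eq_top, eq_top_iff, ← (Pi.basisFun K X).span_eq, Submodule.span_le,
    Set.range_subset_iff]
  intro x
  rw [Pi.basisFun_apply]
  exact single_one_mem_of_separatesPoints hA x

end SeparatesPoints

section MatrixCoeffs

variable {k G V W : Type*} [Monoid G]

/-- The set of matrix coefficients `g ↦ η (ρ g v)` of a representation `ρ` on `V`, for `v` in `V`
and `η` in the dual of `V`. They detect which elements of the group algebra annihilate `ρ`. The set
itself is taken rather than its span, as it is this set that tensor products multiply. -/
def matrixCoeffs [CommSemiring k] [AddCommMonoid V] [Module k V] (ρ : Representation k G V) :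
    Set (G → k) :=
  {f | ∃ (η : Module.Dual k V) (v : V), f = fun g => η (ρ g v)}

theorem one_mem_matrixCoeffs_trivial [CommSemiring k] :
    1 ∈ matrixCoeffs (Representation.trivial k G k) :=
  ⟨LinearMap.id, 1, rfl⟩

theorem mul_mem_matrixCoeffs_tprod [CommSemiring k] [AddCommMonoid V] [Module k V]
    [AddCommMonoid W] [Module k W] {ρ : Representation k G V} {σ : Representation k G W}
    {f f' : G → k} (hf : f ∈ matrixCoeffs ρ) (hf' : f' ∈ matrixCoeffs σ) :
    f * f' ∈ matrixCoeffs (ρ.tprod σ) := by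
  obtain ⟨η, v, rfl⟩ := hf
  obtain ⟨ξ, w, rfl⟩ := hf'
  refine ⟨TensorProduct.dualDistrib k V W (η ⊗ₜ ξ), v ⊗ₜ w, ?_⟩
  ext g
  simp

theorem separatesPoints_matrixCoeffs [CommRing k] [AddCommGroup V] [Module k V]
    [Module.Projective k V] {ρ : Representation k G V} (hρ : Function.Injective ρ) :
    (matrixCoeffs ρ).SeparatesPoints := by
  intro g h hgh
  obtain ⟨v, hv⟩ := DFunLike.ne_iff.mp (hρ.ne hgh)
  obtain ⟨η, hη⟩ := Module.Projective.exists_dual_ne_zero k (sub_ne_zero.mpr hv)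
  exact ⟨_, ⟨η, v, rfl⟩, sub_ne_zero.mp (by simpa using hη)⟩

theorem dotProduct_eq_zero_of_mem_annihilator [Fintype G] [CommSemiring k] [AddCommMonoid V]
    [Module k V] {ρ : Representation k G V} {a : MonoidAlgebra k G}
    (ha : a ∈ Module.annihilator (MonoidAlgebra k G) ρ.asModule) {f : G → k}
    (hf : f ∈ matrixCoeffs ρ) : a.coeff ⬝ᵥ f = 0 := by
  obtain ⟨η, v, rfl⟩ := hf
  have asAlgebraHom_apply_eq_zero : ρ.asAlgebraHom a v = 0 := by
    simpa using congrArg ρ.asModuleEquiv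
      (Module.mem_annihilator.mp ha (ρ.asModuleEquiv.symm v))
  calc a.coeff ⬝ᵥ (fun g => η (ρ g v)) = η (ρ.asAlgebraHom a v) := by
        simp [dotProduct, Representation.asAlgebraHom_def, MonoidAlgebra.lift_apply,
          Finsupp.sum_fintype]
    _ = 0 := by rw [asAlgebraHom_apply_eq_zero, map_zero]

theorem iInf_annihilator_asModule_eq_bot [Finite G] [CommSemiring k] {ι : Type*} {V : ι → Type*}
    [∀ i, AddCommMonoid (V i)] [∀ i, Module k (V i)] (ρ : ∀ i, Representation k G (V i))
    (h : Submodule.span k (⋃ i, matrixCoeffs (ρ i)) = ⊤) :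
    ⨅ i, Module.annihilator (MonoidAlgebra k G) (ρ i).asModule = ⊥ := by
  have := Fintype.ofFinite G
  refine eq_bot_iff.mpr fun a ha => ?_
  have dotProduct_eq_zero_on_coeffs : ∀ f ∈ ⋃ i, matrixCoeffs (ρ i), a.coeff ⬝ᵥ f = 0 := by
    intro f hf
    obtain ⟨i, hi⟩ := Set.mem_iUnion.mp hf
    exact dotProduct_eq_zero_of_mem_annihilator ((Submodule.mem_iInf _).mp ha i) hi
  have dotProductBilin_eq_zero : dotProductBilin k k a.coeff = 0 :=
    LinearMap.ext_on h dotProduct_eq_zero_on_coeffs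
  have coeff_eq_zero : (a.coeff : G → k) = 0 :=
    dotProduct_eq_zero _ (LinearMap.congr_fun dotProductBilin_eq_zero)
  ext g
  exact congrFun coeff_eq_zero g

end MatrixCoeffs

theorem closure_matrixCoeffs_subset_iUnion_repTensorPow {k G : Type} [CommRing k] [Monoid G]
    (V : Rep k G) : (Submonoid.closure (matrixCoeffs V.ρ) : Set (G → k)) ⊆
      ⋃ n, matrixCoeffs (repTensorPow k G V n).ρ := by
  intro f hf
  refine Set.mem_iUnion.mpr ?_
  induction hf using Submonoid.closure_induction_right with
  | one => exact ⟨0, one_mem_matrixCoeffs_trivial⟩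
  | mul_right f _ f' hf' ih =>
    obtain ⟨n, hn⟩ := ih
    exact ⟨n + 1, mul_mem_matrixCoeffs_tprod hn hf'⟩

theorem span_iUnion_matrixCoeffs_repTensorPow_eq_top {F G : Type} [Field F] [Monoid G] [Finite G]
    {V : Rep F G} (hV : Function.Injective V.ρ) :
    Submodule.span F (⋃ n, matrixCoeffs (repTensorPow F G V n).ρ) = ⊤ := by
  have adjoin_eq_top : Algebra.adjoin F (matrixCoeffs V.ρ) = ⊤ :=
    subalgebra_eq_top_of_separatesPoints
      (Set.separatesPoints_mono Algebra.subset_adjoin (separatesPoints_matrixCoeffs hV))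
  rw [eq_top_iff, ← Algebra.toSubmodule_eq_top.mpr adjoin_eq_top, Algebra.adjoin_eq_span]
  exact Submodule.span_mono (closure_matrixCoeffs_subset_iUnion_repTensorPow V)

theorem stmt16_general (F : Type) [Field F] (G : Type) [Monoid G] [Finite G] (V : Rep F G)
    (hfaithful : Function.Injective fun g : G => V.ρ g) : TensorRich F G V := by
  intro S _ _ _
  have : IsArtinianRing (MonoidAlgebra F G) := IsArtinianRing.of_finite F _
  have iInf_annihilator_eq_bot := iInf_annihilator_asModule_eq_bot
    (fun n => (repTensorPow F G V n).ρ) (span_iUnion_matrixCoeffs_repTensorPow_eq_top hfaithful)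
  exact exists_isCompositionFactor_of_iInf_annihilator_le
    (iInf_annihilator_eq_bot.trans_le bot_le)

/-- Corollary 7.4 of the paper. Over an algebraically closed
field `F`, every finite-dimensional faithful representation `V` of a finite
group `G` is tensor-rich. -/
theorem stmt16 (F : Type) [Field F] [IsAlgClosed F]
    (G : Type) [Group G] [Fintype G]
    (V : Rep F G) [FiniteDimensional F V]
    (hfaithful : Function.Injective fun g : G => V.ρ g) :
    TensorRich F G V :=
  stmt16_general F G V hfaithful
end
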